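/- Every subcode D of the 9-dimensional exceptional triply even code D^{ex} of length 48 that contains the all-one vector satisfies dim(D·D) = C(dim D, 2) + 1. -/

import Mathlib

/-- `Ω`: the set of 2-element subsets of `X = {1,…,10}`. -/
def TwoSubset : Type := {S : Finset (Fin 10) // S.card = 2}

instance : Fintype TwoSubset := by unfold TwoSubset; infer_instance
instance : DecidableEq TwoSubset := by unfold TwoSubset; infer_instance

/-- `γ_{{i,j}} ∈ F₂^Ω`: the characteristic vector of `{S ∈ Ω : |S ∩ {i,j}| = 1}`. -/
def triGamma (p : TwoSubset) : TwoSubset → ZMod 2 :=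
  fun S => if (S.1 ∩ p.1).card = 1 then 1 else 0

/-- `ι : F₂^45 → F₂^48` appending three zero coordinates. -/
def iotaExt (v : TwoSubset → ZMod 2) : TwoSubset ⊕ Fin 3 → ZMod 2 :=
  Sum.elim v 0

/-- The exceptional triply even code `D^{ex}` of length 48: generated by the (appended)
rows `ι(γ_{{i,j}})` of the incidence matrix of the triangular graph on 10 points together
with the all-one vector. -/
def Dex : Submodule (ZMod 2) (TwoSubset ⊕ Fin 3 → ZMod 2) :=
  Submodule.span (ZMod 2)
    (Set.range (fun p => iotaExt (triGamma p)) ∪ {(1 : TwoSubset ⊕ Fin 3 → ZMod 2)})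

/-- `D·D`: the span of all coordinatewise products of pairs of codewords. -/
def DdotD {ι : Type*} [Fintype ι] (D : Submodule (ZMod 2) (ι → ZMod 2)) :
    Submodule (ZMod 2) (ι → ZMod 2) :=
  Submodule.span (ZMod 2) {z | ∃ a ∈ D, ∃ b ∈ D, z = a * b}

/-- The subsets of `T` with at most two elements. -/
def atMostPairs {α : Type*} (T : Finset α) : Finset (Finset α) :=
  T.powerset.filter fun s => s.card ≤ 2

lemma mem_atMostPairs {α : Type*} {T s : Finset α} :
    s ∈ atMostPairs T ↔ s ⊆ T ∧ s.card ≤ 2 := by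
  simp [atMostPairs]

lemma card_atMostPairs {α : Type*} (T : Finset α) :
    (atMostPairs T).card = (T.card + 1).choose 2 + 1 := by
  classical
  have hmaps : ∀ s ∈ atMostPairs T, s.card ∈ Finset.range 3 := fun s hs => by
    have := (mem_atMostPairs.1 hs).2
    simp only [Finset.mem_range]
    omega
  have hfib : ∀ k ∈ Finset.range 3,
      ((atMostPairs T).filter fun s => s.card = k).card = T.card.choose k := fun k hk => by
    rw [← Finset.card_powersetCard]
    congr 1
    ext s
    simp only [Finset.mem_filter, mem_atMostPairs, Finset.mem_powersetCard, Finset.mem_range]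
      at hk ⊢
    constructor
    · rintro ⟨⟨h, -⟩, h'⟩
      exact ⟨h, h'⟩
    · rintro ⟨h, h'⟩
      exact ⟨⟨h, by omega⟩, h'⟩
  rw [Finset.card_eq_sum_card_fiberwise hmaps, Finset.sum_congr rfl hfib,
    Nat.choose_succ_succ' T.card 1]
  simp only [Finset.sum_range_succ, Finset.sum_range_zero, Nat.choose_zero_right,
    Nat.choose_one_right, Nat.reduceAdd]
  omega

/-- Products of functions over the sets of a family are linearly independent as soon as every
member of the family is cut out by evaluation at some point. -/
lemma linearIndepOn_prod_of_separating {R X κ : Type*} [CommRing R] [DecidableEq κ]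
    (y : κ → X → R) (P : Finset (Finset κ))
    (hP : ∀ t ∈ P, ∃ x, ∀ i, y i x = if i ∈ t then 1 else 0) :
    LinearIndepOn R (fun s : Finset κ => ∏ i ∈ s, y i) (P : Set (Finset κ)) := by
  rw [linearIndepOn_finset_iff]
  intro c hc t
  induction t using Finset.strongInduction with
  | H t ih =>
    intro ht
    obtain ⟨x, hx⟩ := hP t ht
    have heval := congrFun hc x
    rw [Finset.sum_apply, Finset.sum_eq_single t] at heval
    · have : ∏ j ∈ t, y j x = 1 := Finset.prod_eq_one fun i hi => by simp [hx, hi]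
      simpa [Finset.prod_apply, this] using heval
    · intro s hs hst
      by_cases hsub : s ⊆ t
      · simp [ih s (hsub.ssubset_of_ne hst) hs]
      · obtain ⟨i, his, hit⟩ := Finset.not_subset.1 hsub
        have : ∏ j ∈ s, y j x = 0 := Finset.prod_eq_zero his (by simp [hx, hit])
        simp [Finset.prod_apply, this]
    · exact fun h => absurd ht h

section

variable {ι : Type*} [Fintype ι]

lemma DdotD_eq_mul (D : Submodule (ZMod 2) (ι → ZMod 2)) : DdotD D = D * D := by
  rw [Submodule.mul_eq_span_mul_set, DdotD]
  congr 1
  ext z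
  simp only [Set.mem_ofPred_eq, Set.mem_mul, SetLike.mem_coe, eq_comm]

lemma prod_mem_DdotD {κ : Type*} {D : Submodule (ZMod 2) (ι → ZMod 2)}
    (h1 : (1 : ι → ZMod 2) ∈ D) {y : κ → ι → ZMod 2} {s : Finset κ} (hs : s.card ≤ 2)
    (hy : ∀ i ∈ s, y i ∈ D) : ∏ i ∈ s, y i ∈ DdotD D := by
  classical
  rw [DdotD_eq_mul]
  obtain h | h | h : s.card = 0 ∨ s.card = 1 ∨ s.card = 2 := by omega
  · rw [Finset.card_eq_zero.1 h, Finset.prod_empty, ← one_mul (1 : ι → ZMod 2)]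
    exact Submodule.mul_mem_mul h1 h1
  · obtain ⟨a, rfl⟩ := Finset.card_eq_one.1 h
    rw [Finset.prod_singleton, ← one_mul (y a)]
    exact Submodule.mul_mem_mul h1 (hy a (by simp))
  · obtain ⟨a, b, hab, rfl⟩ := Finset.card_eq_two.1 h
    rw [Finset.prod_pair hab]
    exact Submodule.mul_mem_mul (hy a (by simp)) (hy b (by simp))

lemma DdotD_eq_span_prod [DecidableEq (ι → ZMod 2)] (D : Submodule (ZMod 2) (ι → ZMod 2))
    (T : Finset (ι → ZMod 2))
    (hT : Submodule.span (ZMod 2) (insert 1 (T : Set (ι → ZMod 2))) = D) :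
    DdotD D = Submodule.span (ZMod 2)
      ((fun s : Finset (ι → ZMod 2) => ∏ f ∈ s, f) '' (atMostPairs T : Set (Finset _))) := by
  have hsub : insert 1 (T : Set (ι → ZMod 2)) ⊆ D := hT ▸ Submodule.subset_span
  apply le_antisymm
  · rw [DdotD_eq_mul, ← hT, Submodule.span_mul_span]
    apply Submodule.span_mono
    rintro _ ⟨f, hf, g, hg, rfl⟩
    simp only [Set.mem_image, Finset.mem_coe, mem_atMostPairs]
    rcases hf with rfl | hf <;> rcases hg with rfl | hg
    · exact ⟨∅, by simp⟩
    · exact ⟨{g}, by simpa using hg⟩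
    · exact ⟨{f}, by simpa using hf⟩
    · by_cases hfg : f = g
      · subst hfg
        refine ⟨{f}, by simpa using hf, ?_⟩
        have hidem : ∀ a : ZMod 2, a = a * a := by decide
        simp only [Finset.prod_singleton]
        exact funext fun x => hidem (f x)
      · exact ⟨{f, g}, ⟨by
          intro h hh
          rcases Finset.mem_insert.1 hh with rfl | hh
          · exact hf
          · rw [Finset.mem_singleton.1 hh]; exact hg, Finset.card_le_two⟩, Finset.prod_pair hfg⟩
  · rw [Submodule.span_le]
    rintro _ ⟨s, hs, rfl⟩
    obtain ⟨hsT, hs2⟩ := mem_atMostPairs.1 (Finset.mem_coe.1 hs)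
    exact prod_mem_DdotD (hsub (Set.mem_insert _ _)) hs2
      fun f hf => hsub (Set.mem_insert_of_mem _ (hsT hf))

/-- If `C` contains the all-one vector and `C·C` has the largest dimension allowed by `dim C`,
then the same holds for every subcode of `C` containing the all-one vector. -/
lemma finrank_DdotD_of_le [Nonempty ι] {C D : Submodule (ZMod 2) (ι → ZMod 2)}
    (hC : (Module.finrank (ZMod 2) C).choose 2 + 1 ≤ Module.finrank (ZMod 2) (DdotD C))
    (hDC : D ≤ C) (h1 : (1 : ι → ZMod 2) ∈ D) :
    Module.finrank (ZMod 2) (DdotD D) = (Module.finrank (ZMod 2) D).choose 2 + 1 := by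
  classical
  have hone : LinearIndepOn (ZMod 2) id ({1} : Set (ι → ZMod 2)) :=
    LinearIndepOn.singleton (by simp)
  obtain ⟨b, hbD, hb1, hDb, hb⟩ :=
    exists_linearIndepOn_id_extension hone (t := (D : Set (ι → ZMod 2))) (by simpa using h1)
  obtain ⟨b', hbC, hbb', hCb, hb'⟩ :=
    exists_linearIndepOn_id_extension hb (t := (C : Set (ι → ZMod 2))) (hbD.trans hDC)
  have key : ∀ (E : Submodule (ZMod 2) (ι → ZMod 2)) (u : Set (ι → ZMod 2)),
      u ⊆ E → (E : Set (ι → ZMod 2)) ⊆ Submodule.span (ZMod 2) u → 1 ∈ u →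
      LinearIndepOn (ZMod 2) id u →
      Submodule.span (ZMod 2)
        (insert 1 ((u.toFinset.erase 1 : Finset _) : Set (ι → ZMod 2))) = E ∧
      (atMostPairs (u.toFinset.erase 1)).card = (Module.finrank (ZMod 2) E).choose 2 + 1 := by
    intro E u huE hEu hu1 hu
    have hspan : Submodule.span (ZMod 2) u = E := le_antisymm (Submodule.span_le.2 huE) hEu
    refine ⟨by simpa [Set.insert_eq_of_mem hu1] using hspan, ?_⟩
    have hcard : Module.finrank (ZMod 2) E = u.toFinset.card := by
      rw [← hspan]
      exact finrank_span_set_eq_card hu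
    rw [card_atMostPairs, Finset.card_erase_add_one (by simpa using hu1), hcard]
  obtain ⟨hspanD, hcardD⟩ := key D b hbD hDb (hb1 rfl) hb
  obtain ⟨hspanC, hcardC⟩ := key C b' hbC hCb (hbb' (hb1 rfl)) hb'
  have hindC : LinearIndepOn (ZMod 2) (fun s : Finset (ι → ZMod 2) => ∏ f ∈ s, f)
      (atMostPairs (b'.toFinset.erase 1) : Set (Finset (ι → ZMod 2))) := by
    rw [← hcardC, DdotD_eq_span_prod C _ hspanC, Set.image_eq_range] at hC
    refine linearIndependent_iff_card_le_finrank_span.2 (le_trans (by simp) hC)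
  have hsub : atMostPairs (b.toFinset.erase 1) ⊆ atMostPairs (b'.toFinset.erase 1) := by
    intro s hs
    rw [mem_atMostPairs] at hs ⊢
    exact ⟨hs.1.trans (Finset.erase_subset_erase _ (Set.toFinset_mono hbb')), hs.2⟩
  have hindD := hindC.mono (Finset.coe_subset.2 hsub)
  rw [DdotD_eq_span_prod D _ hspanD, ← hcardD, Set.image_eq_range]
  exact (finrank_span_eq_card hindD).trans (by simp)

end

/-- The sum of the coordinate indicators at `k` and `9`, extended by zeros. -/
def pointGen (k : Fin 10) : TwoSubset ⊕ Fin 3 → ZMod 2 :=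
  iotaExt fun S => (if k ∈ S.1 then 1 else 0) + if 9 ∈ S.1 then 1 else 0

lemma pointGen_inl (k : Fin 10) (S : Finset (Fin 10)) (hS : S.card = 2) :
    pointGen k (Sum.inl ⟨S, hS⟩) = (if k ∈ S then 1 else 0) + if 9 ∈ S then 1 else 0 :=
  rfl

lemma iotaExt_triGamma {a b : Fin 10} (hab : a ≠ b) (h : ({a, b} : Finset (Fin 10)).card = 2) :
    iotaExt (triGamma ⟨{a, b}, h⟩) = pointGen a + pointGen b := by
  funext x
  rcases x with S | k
  · have hS : (S.1 ∩ {a, b}).card = (if a ∈ S.1 then 1 else 0) + if b ∈ S.1 then 1 else 0 := by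
      rw [Finset.inter_comm, ← Finset.filter_mem_eq_inter, Finset.card_filter, Finset.sum_pair hab]
    simp only [iotaExt, triGamma, pointGen, Pi.add_apply, Sum.elim_inl, hS]
    split_ifs <;> first | rfl | simp_all
  · simp [iotaExt, pointGen]

lemma pointGen_nine : pointGen 9 = 0 := by
  funext x
  rcases x with S | k
  · simp only [pointGen, iotaExt, Sum.elim_inl, Pi.zero_apply]
    split_ifs <;> rfl
  · rfl

lemma sum_pointGen : ∑ k, pointGen k = 0 := by
  funext x
  rcases x with S | k
  · have hS : ∑ k : Fin 10, (if k ∈ S.1 then (1 : ZMod 2) else 0) = 0 := by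
      rw [Finset.sum_boole, Finset.filter_univ_mem, S.2]
      rfl
    simp only [Finset.sum_apply, pointGen, iotaExt, Sum.elim_inl, Finset.sum_add_distrib, hS,
      Finset.sum_const, Finset.card_univ, Fintype.card_fin, Pi.zero_apply, nsmul_eq_mul]
    split_ifs <;> rfl
  · simp [pointGen, iotaExt]

lemma pointGen_mem_Dex (k : Fin 10) : pointGen k ∈ Dex := by
  by_cases hk : k = 9
  · rw [hk, pointGen_nine]
    exact Dex.zero_mem
  · have h := iotaExt_triGamma hk (Finset.card_pair hk)
    rw [pointGen_nine, add_zero] at h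
    exact h ▸ Submodule.subset_span (Or.inl ⟨_, rfl⟩)

lemma one_mem_Dex : (1 : TwoSubset ⊕ Fin 3 → ZMod 2) ∈ Dex :=
  Submodule.subset_span (Or.inr rfl)

lemma Dex_le_span :
    Dex ≤ Submodule.span (ZMod 2)
      (Set.range (Fin.cons 1 fun i : Fin 8 => pointGen (i.castLE (by decide)) :
        Fin 9 → TwoSubset ⊕ Fin 3 → ZMod 2)) := by
  set W := Submodule.span (ZMod 2)
      (Set.range (Fin.cons 1 fun i : Fin 8 => pointGen (i.castLE (by decide)) :
        Fin 9 → TwoSubset ⊕ Fin 3 → ZMod 2))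
  have hlow : ∀ i : Fin 8, pointGen (i.castLE (by decide)) ∈ W := fun i =>
    Submodule.subset_span ⟨i.succ, by simp⟩
  have height : pointGen 8 ∈ W := by
    have hsum := sum_pointGen
    rw [Fin.sum_univ_castSucc, Fin.sum_univ_castSucc] at hsum
    have hlast : pointGen (Fin.last 9) = 0 := pointGen_nine
    rw [hlast, add_zero] at hsum
    have h8 : pointGen 8 = -∑ i : Fin 8, pointGen i.castSucc.castSucc :=
      eq_neg_of_add_eq_zero_right hsum
    rw [h8]
    exact W.neg_mem (W.sum_mem fun i _ => hlow i)
  have hall : ∀ k, pointGen k ∈ W := by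
    intro k
    by_cases hk : k.1 < 8
    · exact hlow ⟨k.1, hk⟩
    · have hk' : k = 8 ∨ k = 9 := by omega
      rcases hk' with rfl | rfl
      · exact height
      · rw [pointGen_nine]
        exact W.zero_mem
  rw [Dex, Submodule.span_le]
  rintro _ (⟨⟨p, hp⟩, rfl⟩ | rfl)
  · obtain ⟨a, b, hab, rfl⟩ := Finset.card_eq_two.1 hp
    simp only [iotaExt_triGamma hab]
    exact W.add_mem (hall a) (hall b)
  · exact Submodule.subset_span ⟨0, rfl⟩

lemma finrank_Dex_le : Module.finrank (ZMod 2) Dex ≤ 9 :=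
  (Submodule.finrank_mono Dex_le_span).trans ((finrank_range_le_card _).trans (by simp))

lemma exists_pointGen_eq_indicator (t : Finset (Fin 8)) (ht : t.card ≤ 2) :
    ∃ x, ∀ i : Fin 8, pointGen (i.castLE (by decide)) x = if i ∈ t then 1 else 0 := by
  have hinj : ∀ i j : Fin 8, (i.castLE (by decide) : Fin 10) = j.castLE (by decide) ↔ i = j :=
    fun i j => Fin.castLE_inj
  obtain h | h | h : t.card = 0 ∨ t.card = 1 ∨ t.card = 2 := by omega
  · exact ⟨Sum.inr 0, by simp [pointGen, iotaExt, Finset.card_eq_zero.1 h]⟩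
  · obtain ⟨a, rfl⟩ := Finset.card_eq_one.1 h
    have ha : (a.castLE (by decide) : Fin 10) ≠ 8 := by rw [Ne, Fin.ext_iff]; simp; omega
    refine ⟨Sum.inl ⟨{a.castLE (by decide), 8}, Finset.card_pair ha⟩, fun i => ?_⟩
    have hi : (i.castLE (by decide) : Fin 10) ≠ 8 := by rw [Ne, Fin.ext_iff]; simp; omega
    have h9 : (9 : Fin 10) ≠ a.castLE (by decide) := by rw [Ne, Fin.ext_iff]; simp; omega
    rw [pointGen_inl]
    simp [hinj, hi, h9]
  · obtain ⟨a, b, hab, rfl⟩ := Finset.card_eq_two.1 h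
    refine ⟨Sum.inl ⟨{a.castLE (by decide), b.castLE (by decide)},
      Finset.card_pair (by rwa [Ne, hinj])⟩, fun i => ?_⟩
    have h9 : ∀ c : Fin 8, (9 : Fin 10) ≠ c.castLE (by decide) := fun c => by
      rw [Ne, Fin.ext_iff]; simp; omega
    rw [pointGen_inl]
    simp [hinj, h9]

lemma le_finrank_DdotD_Dex : 37 ≤ Module.finrank (ZMod 2) (DdotD Dex) := by
  have hind := linearIndepOn_prod_of_separating
    (fun i : Fin 8 => pointGen (i.castLE (by decide))) (atMostPairs Finset.univ)
    fun t ht => exists_pointGen_eq_indicator t (mem_atMostPairs.1 ht).2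
  have hcard := finrank_span_eq_card hind
  simp only [Finset.coe_sort_coe, Fintype.card_coe, card_atMostPairs, Finset.card_univ,
    Fintype.card_fin] at hcard
  calc 37 = (8 + 1).choose 2 + 1 := by decide
    _ ≤ _ := by
      rw [← hcard]
      apply Submodule.finrank_mono
      rw [Submodule.span_le]
      rintro _ ⟨s, rfl⟩
      exact prod_mem_DdotD one_mem_Dex (mem_atMostPairs.1 s.2).2 fun i _ => pointGen_mem_Dex _

/-- Every subcode `D` of the 9-dimensional exceptional triply even code `D^{ex}` of length 48
containing the all-one vector satisfies `dim(D·D) = C(dim D, 2) + 1`. -/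
theorem finrank_DdotD_subcode_Dex
    (D : Submodule (ZMod 2) (TwoSubset ⊕ Fin 3 → ZMod 2)) (hD : D ≤ Dex)
    (h1 : (1 : TwoSubset ⊕ Fin 3 → ZMod 2) ∈ D) :
    Module.finrank (ZMod 2) ↥(DdotD D) =
      (Module.finrank (ZMod 2) ↥D).choose 2 + 1 := by
  have : Nonempty (TwoSubset ⊕ Fin 3) := ⟨Sum.inr 0⟩
  refine finrank_DdotD_of_le ?_ hD h1
  calc (Module.finrank (ZMod 2) Dex).choose 2 + 1 ≤ Nat.choose 9 2 + 1 :=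
        Nat.add_le_add_right (Nat.choose_le_choose 2 finrank_Dex_le) 1
    _ = 37 := by decide
    _ ≤ _ := le_finrank_DdotD_Dex
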